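/- arXiv:1908.06000 — 2 statements merged into one kernel-verified Lean document; each statement's English description precedes it below -/
import Mathlib

section
/- Let n ≥ 2 be an integer and let c ∈ (0,1). There exists c′ ∈ (0,1), depending only on n and c, with the following property: for every Lebesgue-measurable set E ⊆ ℝⁿ with 0 < λ(E) < ∞ satisfying J_n(E) ≥ c·n(n+1)·λ(E)², there exists a measurable set E′ ⊆ E with λ(E′) ≥ c′·λ(E) such that for every x ∈ E′ there is a measurable set F_x ⊆ ℝⁿ which is star-convex at x and satisfies c′·λ(E) ≤ λ(F_x) ≤ c′^{−1}·λ(E) and λ(F_x ∩ E) ≥ c′·λ(E). -/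
/-!
Through every point `x`, twice the measure of a set is the integral over the sphere of
`∫ |r| ^ (d - 1)` over its chords, where `d` is the dimension. A chord of length `L` contributes
at least a constant times `L ^ d`, since at least half of it lies at distance at least `L / 4` from
`x`. So the direction integral of `L ^ d` is at most a constant times the measure of `E`, and a
large convexity index makes it comparable to that measure for a large part of the points `x ∈ E`.

For such an `x`, the star-convex set consists of the points `y` with `|y - x| ≤ K L`, where `L` is
the length of the chord of `E` along the line `xy`. Its measure is at most `K ^ d` times the
direction integral. A chord with at least half of its length further than `K L` from `x` contributes
at least `(K L) ^ (d - 1) * (L / 2)` to the measure of `E`; as `d ≥ 2`, taking `K` large makes such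
chords negligible, and the others have a large part in the star-convex set.
-/

open MeasureTheory
open scoped ENNReal

noncomputable section

/-- `Jn n E` is the `(n+1)`-st power of the `L^{n+1}` norm of the X-ray transform of the
indicator of `E`: the integral over directions `ξ` in the unit sphere (with the standard
unnormalized surface measure `volume.toSphere`) and points `x ∈ E` of the `n`-th power of
the length of the chord of `E` through `x` in direction `ξ`. -/
def Jn (n : ℕ) (E : Set (EuclideanSpace ℝ (Fin n))) : ℝ≥0∞ :=
  ∫⁻ ξ : Metric.sphere (0 : EuclideanSpace ℝ (Fin n)) 1,
    (∫⁻ x in E, (volume {t : ℝ | x + t • (ξ : EuclideanSpace ℝ (Fin n)) ∈ E}) ^ n)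
    ∂((volume : Measure (EuclideanSpace ℝ (Fin n))).toSphere)

section Polar

theorem lintegral_eq_lintegral_Ioi_add_lintegral_Ioi_neg (g : ℝ → ℝ≥0∞) :
    ∫⁻ r, g r = (∫⁻ r in Set.Ioi 0, g r) + ∫⁻ r in Set.Ioi 0, g (-r) := by
  have hneg : ∫⁻ r in Set.Ioi 0, g (-r) = ∫⁻ r in Set.Iio 0, g r := by
    simpa using (Measure.measurePreserving_neg volume).setLIntegral_comp_preimage_emb
      (MeasurableEquiv.neg ℝ).measurableEmbedding g (Set.Iio 0)
  rw [hneg, Measure.restrict_congr_set Iio_ae_eq_Iic, ← Set.compl_Ioi,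
    lintegral_add_compl g measurableSet_Ioi]

variable {V : Type*} [NormedAddCommGroup V] [NormedSpace ℝ V] [FiniteDimensional ℝ V]
  [Nontrivial V] [MeasurableSpace V] [BorelSpace V] (μ : Measure V) [μ.IsAddHaarMeasure]

theorem lintegral_eq_lintegral_toSphere_Ioi {f : V → ℝ≥0∞} (hf : Measurable f) :
    ∫⁻ v, f v ∂μ = ∫⁻ ξ, (∫⁻ r in Set.Ioi (0 : ℝ),
      ‖r‖ₑ ^ (Module.finrank ℝ V - 1) * f (r • (ξ : V))) ∂μ.toSphere := by
  have hpolar : Measurable fun p : Metric.sphere (0 : V) 1 × Set.Ioi (0 : ℝ) ↦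
      f ((p.2 : ℝ) • (p.1 : V)) := by fun_prop
  calc ∫⁻ v, f v ∂μ = ∫⁻ v : ({0}ᶜ : Set V), f v ∂(μ.comap (↑)) := by
        rw [lintegral_subtype_comap (MeasurableSet.singleton _).compl, restrict_compl_singleton]
    _ = ∫⁻ p, f ((p.2 : ℝ) • (p.1 : V))
          ∂μ.toSphere.prod (Measure.volumeIoiPow (Module.finrank ℝ V - 1)) := by
        rw [← μ.measurePreserving_homeomorphUnitSphereProd.lintegral_comp hpolar]
        refine lintegral_congr fun v ↦ ?_
        have hv : ‖(v : V)‖ ≠ 0 := norm_ne_zero_iff.2 v.2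
        simp [smul_smul, hv]
    _ = _ := by
        rw [lintegral_prod _ hpolar.aemeasurable]
        refine lintegral_congr fun ξ ↦ ?_
        have hray : Measurable fun r : Set.Ioi (0 : ℝ) ↦ f ((r : ℝ) • (ξ : V)) := by fun_prop
        rw [Measure.volumeIoiPow, lintegral_withDensity_eq_lintegral_mul _ (by fun_prop) hray,
          ← lintegral_subtype_comap measurableSet_Ioi]
        refine lintegral_congr fun r ↦ ?_
        simp [Real.enorm_eq_ofReal (le_of_lt r.2), ENNReal.ofReal_pow (le_of_lt r.2)]

theorem two_mul_lintegral_eq_lintegral_toSphere {f : V → ℝ≥0∞} (hf : Measurable f) :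
    2 * ∫⁻ v, f v ∂μ = ∫⁻ ξ, (∫⁻ r : ℝ,
      ‖r‖ₑ ^ (Module.finrank ℝ V - 1) * f (r • (ξ : V))) ∂μ.toSphere := by
  have hray : Measurable fun p : Metric.sphere (0 : V) 1 × ℝ ↦
      ‖p.2‖ₑ ^ (Module.finrank ℝ V - 1) * f (p.2 • (p.1 : V)) := by fun_prop
  calc 2 * ∫⁻ v, f v ∂μ = (∫⁻ v, f v ∂μ) + ∫⁻ v, f (-v) ∂μ := by
        rw [two_mul, lintegral_neg_eq_self]
    _ = _ := by
        rw [lintegral_eq_lintegral_toSphere_Ioi μ hf,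
          lintegral_eq_lintegral_toSphere_Ioi μ (f := fun v ↦ f (-v)) (by fun_prop),
          ← lintegral_add_left hray.lintegral_prod_right']
        refine lintegral_congr fun ξ ↦ ?_
        simp only [lintegral_eq_lintegral_Ioi_add_lintegral_Ioi_neg
          (fun r ↦ ‖r‖ₑ ^ (Module.finrank ℝ V - 1) * f (r • (ξ : V))), enorm_neg, neg_smul]

end Polar

section Chord

variable {V : Type*} [AddCommGroup V] [Module ℝ V]

/-- The chord of `E` through `x` in direction `v`, as the set of parameters `t` for which
`x + t • v` lies in `E`; it need not be an interval. -/
def chord (E : Set V) (x v : V) : Set ℝ :=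
  {t | x + t • v ∈ E}

/-- The points `y` whose distance to `x` is at most `K` times the length of the chord of `E` along
the line through `x` and `y`. Lengths are measured in units of `y - x`, so that no norm is needed;
the degenerate chord at `y = x` is everything or empty, according to whether `x ∈ E`. -/
def chordHull (K : ℝ≥0∞) (E : Set V) (x : V) : Set V :=
  {y | 1 ≤ K * volume (chord E x (y - x))}

theorem volume_chord_smul (E : Set V) (x v : V) {r : ℝ} (hr : r ≠ 0) :
    volume (chord E x (r • v)) = ‖r‖ₑ⁻¹ * volume (chord E x v) := by
  have := Real.volume_preimage_mul_right hr (chord E x v)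
  simpa [chord, Set.preimage, mul_smul, Real.enorm_eq_ofReal_abs, abs_inv,
    ENNReal.ofReal_inv_of_pos (abs_pos.2 hr)] using this

theorem add_smul_mem_chordHull {K : ℝ≥0∞} {E : Set V} {x v : V} {r : ℝ} (hr : r ≠ 0) :
    x + r • v ∈ chordHull K E x ↔ ‖r‖ₑ ≤ K * volume (chord E x v) := by
  have hr' : ‖r‖ₑ ≠ 0 := by simpa
  rw [chordHull, Set.mem_ofPred_eq, add_sub_cancel_left, volume_chord_smul E x v hr,
    mul_left_comm, mul_comm, ← div_eq_mul_inv,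
    ENNReal.le_div_iff_mul_le (.inl hr') (.inl enorm_ne_top), one_mul]

theorem self_mem_chordHull {K : ℝ≥0∞} (hK : K ≠ 0) {E : Set V} {x : V} (hx : x ∈ E) :
    x ∈ chordHull K E x := by
  simp [chordHull, chord, hx, hK, ENNReal.mul_top]

theorem chord_chordHull_subset (K : ℝ≥0∞) (E : Set V) (x v : V) :
    chord (chordHull K E x) x v ⊆ Metric.closedEBall 0 (K * volume (chord E x v)) := by
  intro r hr
  obtain rfl | hr0 := eq_or_ne r 0
  · simp
  · simpa using (add_smul_mem_chordHull hr0).1 hr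

theorem chord_inter_closedEBall_subset {K : ℝ≥0∞} (hK : K ≠ 0) (E : Set V) (x v : V) :
    chord E x v ∩ Metric.closedEBall 0 (K * volume (chord E x v)) ⊆
      chord (chordHull K E x ∩ E) x v := by
  rintro r ⟨hr, hrK⟩
  refine ⟨?_, hr⟩
  obtain rfl | hr0 := eq_or_ne r 0
  · have hx : x ∈ E := by simpa [chord] using hr
    simpa using self_mem_chordHull hK hx
  · exact (add_smul_mem_chordHull hr0).2 (by simpa using hrK)

theorem starConvex_chordHull {K : ℝ≥0∞} (hK : K ≠ 0) {E : Set V} {x : V} (hx : x ∈ E) :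
    StarConvex ℝ x (chordHull K E x) := by
  rw [starConvex_iff_forall_pos (self_mem_chordHull hK hx)]
  intro y hy a b ha hb hab
  have hcomb : a • x + b • y = x + b • (y - x) := by
    rw [eq_sub_of_add_eq hab]
    module
  have hy' : x + (1 : ℝ) • (y - x) ∈ chordHull K E x := by simpa using hy
  rw [hcomb, add_smul_mem_chordHull hb.ne']
  rw [add_smul_mem_chordHull one_ne_zero] at hy'
  refine le_trans ?_ hy'
  rw [Real.enorm_eq_ofReal hb.le, Real.enorm_eq_ofReal zero_le_one]
  gcongr
  linarith

variable [MeasurableSpace V] [MeasurableAdd₂ V] [MeasurableSMul₂ ℝ V] {E : Set V}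

theorem measurableSet_setOf_mem_chord (hE : MeasurableSet E) :
    MeasurableSet {q : (V × V) × ℝ | q.2 ∈ chord E q.1.1 q.1.2} :=
  hE.preimage (f := fun q : (V × V) × ℝ ↦ q.1.1 + q.2 • q.1.2) (by fun_prop)

theorem measurable_volume_chord (hE : MeasurableSet E) :
    Measurable fun p : V × V ↦ volume (chord E p.1 p.2) :=
  measurable_measure_prodMk_left (measurableSet_setOf_mem_chord hE)

theorem measurable_setLIntegral_chord (hE : MeasurableSet E) {g : ℝ → ℝ≥0∞} (hg : Measurable g) :
    Measurable fun p : V × V ↦ ∫⁻ r in chord E p.1 p.2, g r := by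
  have hind := ((hg.comp measurable_snd).indicator
    (measurableSet_setOf_mem_chord hE)).lintegral_prod_right' (ν := volume)
  convert hind using 2 with p
  exact (lintegral_indicator
    (measurable_prodMk_left (measurableSet_setOf_mem_chord hE)) _).symm

theorem measurableSet_chordHull [MeasurableNeg V] (K : ℝ≥0∞) (hE : MeasurableSet E) (x : V) :
    MeasurableSet (chordHull K E x) := by
  have hdir : Measurable fun y ↦ (x, y - x) := by
    simp only [sub_eq_add_neg]
    fun_prop
  exact measurableSet_le measurable_const (((measurable_volume_chord hE).comp hdir).const_mul K)

end Chord

section RadialIntegral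

variable (A : Set ℝ) (m : ℕ) (M : ℝ≥0∞)

theorem pow_mul_volume_diff_closedEBall_le :
    M ^ m * volume (A \ Metric.closedEBall 0 M) ≤ ∫⁻ r in A, ‖r‖ₑ ^ m := by
  calc M ^ m * volume (A \ Metric.closedEBall 0 M)
      = ∫⁻ _ in A \ Metric.closedEBall 0 M, M ^ m := (setLIntegral_const _ _).symm
    _ ≤ ∫⁻ r in A \ Metric.closedEBall 0 M, ‖r‖ₑ ^ m := by
        refine setLIntegral_mono (by fun_prop) fun r hr ↦ ?_
        gcongr
        simpa using (not_le.1 (Metric.mem_closedEBall.not.1 hr.2)).le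
    _ ≤ ∫⁻ r in A, ‖r‖ₑ ^ m := lintegral_mono_set Set.sdiff_subset

theorem setLIntegral_closedEBall_enorm_pow_le :
    ∫⁻ r in Metric.closedEBall (0 : ℝ) M, ‖r‖ₑ ^ m ≤ 2 * M ^ (m + 1) := by
  calc ∫⁻ r in Metric.closedEBall (0 : ℝ) M, ‖r‖ₑ ^ m
      ≤ ∫⁻ _ in Metric.closedEBall (0 : ℝ) M, M ^ m := by
        refine setLIntegral_mono (by fun_prop) fun r hr ↦ ?_
        gcongr
        simpa using hr
    _ = 2 * M ^ (m + 1) := by rw [setLIntegral_const, Real.volume_closedEBall]; ring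

theorem pow_mul_volume_le_add_setLIntegral :
    M ^ m * volume A ≤ 2 * M ^ (m + 1) + ∫⁻ r in A, ‖r‖ₑ ^ m := by
  calc M ^ m * volume A
      ≤ M ^ m * (volume (Metric.closedEBall (0 : ℝ) M) + volume (A \ Metric.closedEBall 0 M)) := by
        gcongr
        exact (measure_le_inter_add_sdiff volume A _).trans
          (add_le_add_left (measure_mono Set.inter_subset_right) _)
    _ = 2 * M ^ (m + 1) + M ^ m * volume (A \ Metric.closedEBall 0 M) := by
        rw [Real.volume_closedEBall]; ring
    _ ≤ _ := by gcongr; exact pow_mul_volume_diff_closedEBall_le A m M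

theorem two_mul_volume_pow_succ_le :
    2 * volume A ^ (m + 1) ≤ 4 ^ (m + 1) * ∫⁻ r in A, ‖r‖ₑ ^ m := by
  obtain hA | hA := eq_or_ne (volume A) ⊤
  · have htop : ∫⁻ r in A, ‖r‖ₑ ^ m = ⊤ := by
      simpa [hA] using pow_mul_volume_le_add_setLIntegral A m 1
    simp [htop, ENNReal.mul_top]
  · obtain ⟨M, hM⟩ : ∃ M, volume A = 4 * M :=
      ⟨volume A / 4, (ENNReal.mul_div_cancel (by simp) (by simp)).symm⟩
    have hM' : M ≠ ⊤ := by
      rintro rfl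
      simp [hM, ENNReal.mul_top] at hA
    have hle : 2 * M ^ (m + 1) ≤ ∫⁻ r in A, ‖r‖ₑ ^ m := by
      rw [← ENNReal.add_le_add_iff_left (a := 2 * M ^ (m + 1)) (by finiteness)]
      refine le_trans (le_of_eq ?_) (pow_mul_volume_le_add_setLIntegral A m M)
      rw [hM]
      ring
    calc 2 * volume A ^ (m + 1) = 4 ^ (m + 1) * (2 * M ^ (m + 1)) := by rw [hM]; ring
      _ ≤ _ := by gcongr

theorem pow_mul_two_mul_volume_pow_succ_le (K : ℝ≥0∞) :
    K ^ m * (2 * volume A ^ (m + 1)) ≤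
      K ^ m * (8 ^ (m + 1) * ∫⁻ r in A ∩ Metric.closedEBall 0 (K * volume A), ‖r‖ₑ ^ m)
        + 4 * ∫⁻ r in A, ‖r‖ₑ ^ m := by
  set B : Set ℝ := Metric.closedEBall 0 (K * volume A)
  have hsplit : volume A ≤ volume (A ∩ B) + volume (A \ B) := measure_le_inter_add_sdiff _ _ _
  obtain hmostNear | hmostFar := le_total (volume (A \ B)) (volume (A ∩ B))
  · have hL : volume A ≤ 2 * volume (A ∩ B) := hsplit.trans (by rw [two_mul]; gcongr)
    refine le_add_right (mul_le_mul_right ?_ _)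
    calc 2 * volume A ^ (m + 1) ≤ 2 * (2 * volume (A ∩ B)) ^ (m + 1) := by gcongr
      _ = 2 ^ (m + 1) * (2 * volume (A ∩ B) ^ (m + 1)) := by ring
      _ ≤ 2 ^ (m + 1) * (4 ^ (m + 1) * ∫⁻ r in A ∩ B, ‖r‖ₑ ^ m) := by
          exact mul_le_mul_right (two_mul_volume_pow_succ_le (A ∩ B) m) _
      _ = 8 ^ (m + 1) * ∫⁻ r in A ∩ B, ‖r‖ₑ ^ m := by
          rw [← mul_assoc, ← mul_pow]
          norm_num
  · have hL : volume A ≤ 2 * volume (A \ B) := hsplit.trans (by rw [two_mul]; gcongr)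
    refine le_add_left ?_
    calc K ^ m * (2 * volume A ^ (m + 1)) = 2 * (K * volume A) ^ m * volume A := by ring
      _ ≤ 2 * (K * volume A) ^ m * (2 * volume (A \ B)) := by gcongr
      _ = 4 * ((K * volume A) ^ m * volume (A \ B)) := by ring
      _ ≤ 4 * ∫⁻ r in A, ‖r‖ₑ ^ m := by
          gcongr
          exact pow_mul_volume_diff_closedEBall_le A m _

end RadialIntegral

theorem lintegral_le_mul_measure_setOf_le_add {α : Type*} [MeasurableSpace α] {ν : Measure α}
    {g : α → ℝ≥0∞} (hg : Measurable g) {B : ℝ≥0∞} (hB : ∀ x, g x ≤ B) (b : ℝ≥0∞) :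
    ∫⁻ x, g x ∂ν ≤ B * ν {x | b ≤ g x} + b * ν Set.univ := by
  have hS : MeasurableSet {x | b ≤ g x} := measurableSet_le measurable_const hg
  calc ∫⁻ x, g x ∂ν ≤ ∫⁻ x, {x | b ≤ g x}.indicator (fun _ ↦ B) x + b ∂ν := by
        refine lintegral_mono fun x ↦ ?_
        by_cases hx : b ≤ g x
        · simpa [hx] using le_add_right (hB x)
        · simpa [hx] using (not_le.1 hx).le
    _ = B * ν {x | b ≤ g x} + b * ν Set.univ := by
        rw [lintegral_add_right _ measurable_const, lintegral_indicator_const hS, lintegral_const]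

section ChordPower

variable {V : Type*} [NormedAddCommGroup V] [NormedSpace ℝ V] [FiniteDimensional ℝ V]
  [MeasurableSpace V] [BorelSpace V] (μ : Measure V) {E : Set V}

/-- The integral over all directions of the `d`-th power of the length of the chord of `E`
through `x`, where `d` is the dimension; its integral over `x ∈ E` is the convexity index. -/
def chordPower (E : Set V) (x : V) : ℝ≥0∞ :=
  ∫⁻ ξ, volume (chord E x (ξ : V)) ^ Module.finrank ℝ V ∂μ.toSphere

variable [μ.IsAddHaarMeasure]

theorem measurable_volume_chord_sphere (hE : MeasurableSet E) :
    Measurable fun p : V × Metric.sphere (0 : V) 1 ↦ volume (chord E p.1 (p.2 : V)) :=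
  (measurable_volume_chord hE).comp (f := fun p : V × Metric.sphere (0 : V) 1 ↦ (p.1, (p.2 : V)))
    (by fun_prop)

theorem measurable_volume_chord_sphere_pow (hE : MeasurableSet E) (x : V) (m : ℕ) :
    Measurable fun ξ : Metric.sphere (0 : V) 1 ↦ volume (chord E x (ξ : V)) ^ m :=
  ((measurable_volume_chord_sphere hE).comp measurable_prodMk_left).pow_const m

theorem measurable_setLIntegral_chord_sphere (hE : MeasurableSet E) (x : V) {g : ℝ → ℝ≥0∞}
    (hg : Measurable g) :
    Measurable fun ξ : Metric.sphere (0 : V) 1 ↦ ∫⁻ r in chord E x (ξ : V), g r :=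
  (measurable_setLIntegral_chord hE hg).comp
    (f := fun ξ : Metric.sphere (0 : V) 1 ↦ (x, (ξ : V))) (by fun_prop)

theorem measurable_chordPower (hE : MeasurableSet E) : Measurable (chordPower μ E) :=
  ((measurable_volume_chord_sphere hE).pow_const _).lintegral_prod_right'

variable [Nontrivial V]

theorem two_mul_measure_eq_lintegral_chord (hE : MeasurableSet E) (x : V) :
    2 * μ E = ∫⁻ ξ, (∫⁻ r in chord E x (ξ : V),
      ‖r‖ₑ ^ (Module.finrank ℝ V - 1)) ∂μ.toSphere := by
  have hind : Measurable fun v ↦ E.indicator (1 : V → ℝ≥0∞) (x + v) :=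
    (measurable_one.indicator hE).comp (measurable_const_add x)
  rw [← lintegral_indicator_one hE, ← lintegral_add_left_eq_self (E.indicator 1) x,
    two_mul_lintegral_eq_lintegral_toSphere μ hind]
  refine lintegral_congr fun ξ ↦ ?_
  have hchord : MeasurableSet (chord E x (ξ : V)) :=
    hE.preimage (f := fun r : ℝ ↦ x + r • (ξ : V)) (by fun_prop)
  rw [← lintegral_indicator hchord]
  refine lintegral_congr fun r ↦ ?_
  by_cases hr : x + r • (ξ : V) ∈ E <;> simp [chord, hr]

theorem chordPower_le (hE : MeasurableSet E) (x : V) :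
    chordPower μ E x ≤ 4 ^ Module.finrank ℝ V * μ E := by
  have hd := Nat.sub_one_add_one (Module.finrank_pos (R := ℝ) (M := V)).ne'
  rw [← ENNReal.mul_le_mul_iff_right (a := 2) (by simp) (by simp), mul_left_comm,
    two_mul_measure_eq_lintegral_chord μ hE x, chordPower,
    ← lintegral_const_mul' _ _ (by simp), ← lintegral_const_mul' _ _ (by simp)]
  refine lintegral_mono fun ξ ↦ ?_
  simpa only [hd] using two_mul_volume_pow_succ_le (chord E x (ξ : V)) (Module.finrank ℝ V - 1)

theorem measure_chordHull_le (K : ℝ≥0∞) (hE : MeasurableSet E) (x : V) :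
    μ (chordHull K E x) ≤ K ^ Module.finrank ℝ V * chordPower μ E x := by
  have hd := Nat.sub_one_add_one (Module.finrank_pos (R := ℝ) (M := V)).ne'
  rw [← ENNReal.mul_le_mul_iff_right (a := 2) (by simp) (by simp),
    two_mul_measure_eq_lintegral_chord μ (measurableSet_chordHull K hE x) x, chordPower,
    ← lintegral_const_mul _ (measurable_volume_chord_sphere_pow hE x _),
    ← lintegral_const_mul' _ _ (by simp)]
  refine lintegral_mono fun ξ ↦ ?_
  simpa only [hd, mul_pow] using
    (lintegral_mono_set (chord_chordHull_subset K E x (ξ : V))).trans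
      (setLIntegral_closedEBall_enorm_pow_le (Module.finrank ℝ V - 1) _)

theorem pow_mul_chordPower_le {K : ℝ≥0∞} (hK : K ≠ 0) (hE : MeasurableSet E) (x : V) :
    K ^ (Module.finrank ℝ V - 1) * chordPower μ E x ≤
      K ^ (Module.finrank ℝ V - 1) * (8 ^ Module.finrank ℝ V * μ (chordHull K E x ∩ E))
        + 4 * μ E := by
  set m := Module.finrank ℝ V - 1
  have hd : m + 1 = Module.finrank ℝ V := Nat.sub_one_add_one Module.finrank_pos.ne'
  have hHE : MeasurableSet (chordHull K E x ∩ E) := (measurableSet_chordHull K hE x).inter hE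
  have hpower := measurable_volume_chord_sphere_pow hE x (Module.finrank ℝ V)
  have hradial {A : Set V} (hA : MeasurableSet A) :=
    measurable_setLIntegral_chord_sphere hA x (g := fun r ↦ ‖r‖ₑ ^ m) (by fun_prop)
  suffices h : K ^ m * (2 * chordPower μ E x) ≤
      K ^ m * (8 ^ Module.finrank ℝ V * (2 * μ (chordHull K E x ∩ E))) + 4 * (2 * μ E) by
    rw [← ENNReal.mul_le_mul_iff_right (a := 2) (by simp) (by simp)]
    convert h using 1 <;> ring
  rw [two_mul_measure_eq_lintegral_chord μ hE x, two_mul_measure_eq_lintegral_chord μ hHE x,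
    chordPower, ← lintegral_const_mul _ hpower, ← lintegral_const_mul _ (hpower.const_mul _),
    ← lintegral_const_mul _ (hradial hHE), ← lintegral_const_mul _ ((hradial hHE).const_mul _),
    ← lintegral_const_mul _ (hradial hE), ← lintegral_add_right _ ((hradial hE).const_mul _)]
  refine lintegral_mono fun ξ ↦ ?_
  rw [← hd]
  refine (pow_mul_two_mul_volume_pow_succ_le (chord E x (ξ : V)) m K).trans ?_
  gcongr
  exact chord_inter_closedEBall_subset hK E x ξ

theorem measure_le_mul_measure_chordHull_inter (hd : 2 ≤ Module.finrank ℝ V) {K : ℝ≥0∞}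
    (hK : 1 ≤ K) (hE : MeasurableSet E) (hEtop : μ E ≠ ⊤) {x : V}
    (hx : 8 * μ E ≤ K * chordPower μ E x) :
    μ E ≤ (8 * K) ^ Module.finrank ℝ V * μ (chordHull K E x ∩ E) := by
  set d := Module.finrank ℝ V
  have hsum : 4 * μ E + 4 * μ E ≤
      K ^ (d - 1) * (8 ^ d * μ (chordHull K E x ∩ E)) + 4 * μ E :=
    calc 4 * μ E + 4 * μ E = 8 * μ E := by ring
      _ ≤ K * chordPower μ E x := hx
      _ ≤ K ^ (d - 1) * chordPower μ E x := by
          gcongr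
          exact le_self_pow₀ hK (by lia)
      _ ≤ _ := pow_mul_chordPower_le μ (one_pos.trans_le hK).ne' hE x
  calc μ E ≤ 4 * μ E := le_mul_of_one_le_left' (by norm_num)
    _ ≤ K ^ (d - 1) * (8 ^ d * μ (chordHull K E x ∩ E)) :=
        (ENNReal.add_le_add_iff_right (by finiteness)).1 hsum
    _ ≤ K ^ d * (8 ^ d * μ (chordHull K E x ∩ E)) := by
        gcongr
        exact Nat.sub_le d 1
    _ = (8 * K) ^ d * μ (chordHull K E x ∩ E) := by ring

theorem measure_le_mul_measure_inter_le_chordPower {K : ℝ≥0∞} (hK : 1 ≤ K) (hE : MeasurableSet E)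
    (hEtop : μ E ≠ ⊤) (hindex : 16 * μ E ^ 2 ≤ K * ∫⁻ x in E, chordPower μ E x ∂μ) :
    μ E ≤ (8 * K) ^ Module.finrank ℝ V * μ (E ∩ {x | 8 * μ E ≤ K * chordPower μ E x}) := by
  obtain hE0 | hE0 := eq_or_ne (μ E) 0
  · simp [hE0]
  set d := Module.finrank ℝ V
  set S := {x | 8 * μ E ≤ K * chordPower μ E x}
  have hmeas : Measurable fun x ↦ K * chordPower μ E x := (measurable_chordPower μ hE).const_mul K
  have hsum : 8 * μ E * μ E + 8 * μ E * μ E ≤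
      K * (4 ^ d * μ E) * μ (E ∩ S) + 8 * μ E * μ E :=
    calc 8 * μ E * μ E + 8 * μ E * μ E = 16 * μ E ^ 2 := by ring
      _ ≤ K * ∫⁻ x in E, chordPower μ E x ∂μ := hindex
      _ = ∫⁻ x in E, K * chordPower μ E x ∂μ :=
          (lintegral_const_mul K (measurable_chordPower μ hE)).symm
      _ ≤ K * (4 ^ d * μ E) * μ.restrict E S + 8 * μ E * μ.restrict E Set.univ :=
          lintegral_le_mul_measure_setOf_le_add hmeas
            (fun x ↦ mul_le_mul_right (chordPower_le μ hE x) K) _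
      _ = _ := by
          rw [Measure.restrict_apply (measurableSet_le measurable_const hmeas),
            Measure.restrict_apply_univ, Set.inter_comm]
  rw [← ENNReal.mul_le_mul_iff_left hE0 hEtop]
  calc μ E * μ E ≤ 8 * μ E * μ E := by
        gcongr
        exact le_mul_of_one_le_left' (by norm_num)
    _ ≤ K * (4 ^ d * μ E) * μ (E ∩ S) := (ENNReal.add_le_add_iff_right (by finiteness)).1 hsum
    _ ≤ K ^ d * (8 ^ d * μ E) * μ (E ∩ S) := by
        gcongr
        · exact le_self_pow₀ hK Module.finrank_pos.ne'
        · norm_num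
    _ = (8 * K) ^ d * μ (E ∩ S) * μ E := by ring

theorem exists_subset_forall_exists_starConvex (hd : 2 ≤ Module.finrank ℝ V) {K : ℝ≥0∞}
    (hK : 1 ≤ K) (hE : MeasurableSet E) (hEtop : μ E ≠ ⊤)
    (hindex : 16 * μ E ^ 2 ≤ K * ∫⁻ x in E, chordPower μ E x ∂μ) :
    ∃ E' ⊆ E, MeasurableSet E' ∧ μ E ≤ (8 * K) ^ Module.finrank ℝ V * μ E' ∧
      ∀ x ∈ E', ∃ F, MeasurableSet F ∧ StarConvex ℝ x F ∧
        μ F ≤ (8 * K) ^ Module.finrank ℝ V * μ E ∧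
        μ E ≤ (8 * K) ^ Module.finrank ℝ V * μ (F ∩ E) := by
  refine ⟨E ∩ {x | 8 * μ E ≤ K * chordPower μ E x}, Set.inter_subset_left,
    hE.inter (measurableSet_le measurable_const ((measurable_chordPower μ hE).const_mul K)),
    measure_le_mul_measure_inter_le_chordPower μ hK hE hEtop hindex, ?_⟩
  rintro x ⟨hxE, hx⟩
  refine ⟨chordHull K E x, measurableSet_chordHull K hE x,
    starConvex_chordHull (one_pos.trans_le hK).ne' hxE, ?_,
    measure_le_mul_measure_chordHull_inter μ hd hK hE hEtop hx⟩
  calc μ (chordHull K E x) ≤ K ^ Module.finrank ℝ V * chordPower μ E x :=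
        measure_chordHull_le μ K hE x
    _ ≤ K ^ Module.finrank ℝ V * (8 ^ Module.finrank ℝ V * μ E) := by
        gcongr
        refine (chordPower_le μ hE x).trans ?_
        gcongr
        norm_num
    _ = (8 * K) ^ Module.finrank ℝ V * μ E := by ring

end ChordPower

theorem Jn_eq_setLIntegral_chordPower {n : ℕ} {E : Set (EuclideanSpace ℝ (Fin n))}
    (hE : MeasurableSet E) : Jn n E = ∫⁻ x in E, chordPower volume E x := by
  rw [Jn, lintegral_lintegral_swap]
  · simp only [chordPower, chord, finrank_euclideanSpace_fin]
  · exact (((measurable_volume_chord_sphere hE).comp measurable_swap).pow_const n).aemeasurable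

theorem statement16_general (d : ℕ) (hd : 2 ≤ d) (a : ℝ) (ha : 0 < a) :
    ∃ c' : ℝ, c' ∈ Set.Ioo (0 : ℝ) 1 ∧
      ∀ {V : Type*} [NormedAddCommGroup V] [NormedSpace ℝ V] [FiniteDimensional ℝ V]
        [MeasurableSpace V] [BorelSpace V] (μ : Measure V) [μ.IsAddHaarMeasure] (E : Set V),
        Module.finrank ℝ V = d → MeasurableSet E → μ E < ⊤ →
        ENNReal.ofReal a * μ E ^ 2 ≤ ∫⁻ x in E, chordPower μ E x ∂μ →
        ∃ E' ⊆ E, MeasurableSet E' ∧ ENNReal.ofReal c' * μ E ≤ μ E' ∧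
          ∀ x ∈ E', ∃ F : Set V, MeasurableSet F ∧ StarConvex ℝ x F ∧
            ENNReal.ofReal c' * μ E ≤ μ F ∧ μ F ≤ ENNReal.ofReal c'⁻¹ * μ E ∧
            ENNReal.ofReal c' * μ E ≤ μ (F ∩ E) := by
  set K : ℝ := max 1 (16 / a)
  have hK1 : 1 ≤ K := le_max_left _ _
  have hKa : 16 ≤ K * a := (div_le_iff₀ ha).1 (le_max_right _ _)
  have hC : 1 < (8 * K) ^ d := one_lt_pow₀ (by linarith) (by lia)
  have hCK : ENNReal.ofReal ((8 * K) ^ d) = (8 * ENNReal.ofReal K) ^ d := by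
    rw [ENNReal.ofReal_pow (by positivity), ENNReal.ofReal_mul (by norm_num), ENNReal.ofReal_ofNat]
  have hinv {p q : ℝ≥0∞} (h : p ≤ ENNReal.ofReal ((8 * K) ^ d) * q) :
      ENNReal.ofReal ((8 * K) ^ d)⁻¹ * p ≤ q := by
    rwa [ENNReal.ofReal_inv_of_pos (by positivity),
      ENNReal.inv_mul_le_iff (ENNReal.ofReal_pos.2 (by positivity)).ne' ENNReal.ofReal_ne_top]
  refine ⟨((8 * K) ^ d)⁻¹, ⟨by positivity, inv_lt_one_of_one_lt₀ hC⟩, ?_⟩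
  rintro V _ _ _ _ _ μ _ E rfl hE hEtop hindex
  have : Nontrivial V := Module.nontrivial_of_finrank_pos (R := ℝ) (by lia)
  have hindexK : 16 * μ E ^ 2 ≤ ENNReal.ofReal K * ∫⁻ x in E, chordPower μ E x ∂μ :=
    calc 16 * μ E ^ 2 ≤ ENNReal.ofReal (K * a) * μ E ^ 2 := by
          gcongr
          simpa using ENNReal.ofReal_le_ofReal hKa
      _ = ENNReal.ofReal K * (ENNReal.ofReal a * μ E ^ 2) := by
          rw [ENNReal.ofReal_mul (by positivity), mul_assoc]
      _ ≤ _ := by gcongr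
  obtain ⟨E', hE'E, hE', hE'large, hF⟩ :=
    exists_subset_forall_exists_starConvex μ hd (by simpa using hK1) hE hEtop.ne hindexK
  simp only [← hCK] at hE'large hF
  refine ⟨E', hE'E, hE', hinv hE'large, fun x hx ↦ ?_⟩
  obtain ⟨F, hFmeas, hFstar, hFsmall, hFE⟩ := hF x hx
  exact ⟨F, hFmeas, hFstar, (hinv hFE).trans (measure_mono Set.inter_subset_left),
    by rwa [inv_inv], hinv hFE⟩

/-- a large convexity index forces star-convex sets at most points of `E`. -/
theorem statement16 (n : ℕ) (hn : 2 ≤ n) (c : ℝ) (hc : c ∈ Set.Ioo (0 : ℝ) 1) :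
    ∃ c' : ℝ, c' ∈ Set.Ioo (0 : ℝ) 1 ∧
      ∀ E : Set (EuclideanSpace ℝ (Fin n)), MeasurableSet E →
        0 < volume E → volume E < ⊤ →
        ENNReal.ofReal (c * (n : ℝ) * ((n : ℝ) + 1)) * (volume E) ^ 2 ≤ Jn n E →
        ∃ E' : Set (EuclideanSpace ℝ (Fin n)), E' ⊆ E ∧ MeasurableSet E' ∧
          ENNReal.ofReal c' * volume E ≤ volume E' ∧
          ∀ x ∈ E', ∃ F : Set (EuclideanSpace ℝ (Fin n)),
            MeasurableSet F ∧ StarConvex ℝ x F ∧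
            ENNReal.ofReal c' * volume E ≤ volume F ∧
            volume F ≤ ENNReal.ofReal c'⁻¹ * volume E ∧
            ENNReal.ofReal c' * volume E ≤ volume (F ∩ E) := by
  obtain ⟨c', hc', h⟩ := statement16_general n hn (c * n * (n + 1)) (by have := hc.1; positivity)
  exact ⟨c', hc', fun E hE _ hEtop hJ ↦ h volume E finrank_euclideanSpace_fin hE hEtop
    (Jn_eq_setLIntegral_chordPower hE ▸ hJ)⟩
end
end

section
/- Let n ≥ 2 be an integer and let c₂ ∈ (0,1) and c₀ ∈ (0, 1/2). There exist constants c′ > 0 and C > 0, depending only on n, c₂ and c₀, with the following property. Let a ≥ 1, let y₁, …, y_n ∈ ℝ^{n−1} × {0} ⊆ ℝⁿ be the vertices of a regular (n−1)-simplex of side length a with barycenter 0, and let G ⊆ ℝⁿ be a Lebesgue-measurable set such that c₂ ≤ λ(G) ≤ c₂^{−1} and c₂ ≤ λ(Star(y_i, G)) ≤ c₂^{−1} for each i = 1, …, n. Let Ω_{c₀} = {ω ∈ S^{n−1} : |⟨ω, e_n⟩| ≥ c₀}. Then for every R > c′·a one has λ(Cone(0, Ω_{c₀}) ∩ G \ B(0,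 R)) ≤ C·R^{−1/(2n−1)}. -/
open MeasureTheory
open scoped ENNReal

noncomputable section

/-- `starSet x A` is the union of all closed segments from `x` to points of `A`. -/
def starSet {n : ℕ} (x : EuclideanSpace ℝ (Fin n)) (A : Set (EuclideanSpace ℝ (Fin n))) :
    Set (EuclideanSpace ℝ (Fin n)) :=
  ⋃ y ∈ A, segment ℝ x y

/-!
Let `σ` be the linear functional equal to `1` on a basis `b`. The map `x ↦ x / (1 + σ x)` carries
lines parallel to `b i` to lines through the point `b i`. Pulling back a set `A` and the union `B`
of its stars about the points `b i` therefore gives sets `E` and `F` such that every line through a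
point of `E` parallel to some `b i` meets `F` in length at least `1`, and the Loomis–Whitney
inequality (in its grid-lines form) bounds `|E|` by `|F| ^ (1 + 1 / (n - 1))`. Since the map has
bounded Jacobian over the slab `1 ≤ 1 - σ ≤ 2`, the same estimate holds for `A` in that slab and
`B`, up to a constant.

To treat the slab at heights between `h` and `2 * h` above a regular simplex of side `a`, apply this
to the basis of vectors from `p` to the vertices, where `p` is the point at height `h` above the
barycenter. The volume of this basis is of order `h * a ^ (n - 1)`, and the superlinear exponent
turns it into a gain of `h ^ (-1 / (n - 1)) / a`, which is summed over dyadic heights.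
-/

section ProjectiveMap

open Module Set

variable {V : Type*} [NormedAddCommGroup V] [NormedSpace ℝ V]

/-- The projective transformation `x ↦ x / (1 + σ x)`. It preserves every line through the origin
and sends the hyperplane `σ = -1` to infinity (to `0` under the convention `0⁻¹ = 0`). -/
def projectiveMap (σ : V →L[ℝ] ℝ) (x : V) : V :=
  (1 + σ x)⁻¹ • x

lemma one_sub_apply_projectiveMap {σ : V →L[ℝ] ℝ} {x : V} (hx : 1 + σ x ≠ 0) :
    1 - σ (projectiveMap σ x) = (1 + σ x)⁻¹ := by
  rw [projectiveMap, map_smul, smul_eq_mul]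
  field_simp
  ring

lemma projectiveMap_neg_projectiveMap {σ : V →L[ℝ] ℝ} {x : V} (hx : 1 + σ x ≠ 0) :
    projectiveMap (-σ) (projectiveMap σ x) = x := by
  rw [projectiveMap, neg_apply, ← sub_eq_add_neg, one_sub_apply_projectiveMap hx,
    projectiveMap, inv_inv, smul_inv_smul₀ hx]

lemma projectiveMap_add_smul_mem_segment {σ : V →L[ℝ] ℝ} {b x : V} {t : ℝ} (hb : σ b = 1)
    (hx : 0 < 1 + σ x) (ht : 0 ≤ t) :
    projectiveMap σ (x + t • b) ∈ segment ℝ b (projectiveMap σ x) := by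
  have hxt : 0 < 1 + σ x + t := by positivity
  refine ⟨t / (1 + σ x + t), (1 + σ x) / (1 + σ x + t), by positivity, by positivity, ?_, ?_⟩
  · rw [← add_div, add_comm, div_self hxt.ne']
  · have hcancel : (1 + σ x) / (1 + σ x + t) * (1 + σ x)⁻¹ = (1 + σ x + t)⁻¹ := by
      field_simp
    simp only [projectiveMap, map_add, map_smul, hb, smul_eq_mul, mul_one, ← add_assoc, smul_smul,
      hcancel]
    module

lemma projectiveMap_projectiveMap_neg_add_smul_mem {σ : V →L[ℝ] ℝ} {b x : V} {t : ℝ}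
    (hb : σ b = 1) (hx : 1 - σ x ∈ Icc 1 2) (ht : t ∈ Icc 0 1) :
    1 + σ (projectiveMap (-σ) x + t • b) ∈ Ioc 0 2 ∧
      projectiveMap σ (projectiveMap (-σ) x + t • b) ∈ segment ℝ b x := by
  have hne : 1 + (-σ) x ≠ 0 := by rw [neg_apply]; linarith [hx.1]
  have hinv : 1 + σ (projectiveMap (-σ) x) = (1 - σ x)⁻¹ := by
    simpa [← sub_eq_add_neg] using one_sub_apply_projectiveMap hne
  have hpos : 0 < (1 - σ x)⁻¹ := inv_pos.2 (one_pos.trans_le hx.1)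
  have hle : (1 - σ x)⁻¹ ≤ 1 := inv_le_one_of_one_le₀ hx.1
  have hright : projectiveMap σ (projectiveMap (-σ) x) = x := by
    simpa using projectiveMap_neg_projectiveMap hne
  constructor
  · rw [map_add, map_smul, hb, smul_eq_mul, mul_one, ← add_assoc, hinv]
    constructor <;> linarith [ht.1, ht.2]
  · have hmem := projectiveMap_add_smul_mem_segment hb (hinv ▸ hpos) ht.1
    rwa [hright] at hmem

lemma hasFDerivAt_projectiveMap {σ : V →L[ℝ] ℝ} {x : V} (hx : 1 + σ x ≠ 0) :
    HasFDerivAt (projectiveMap σ)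
      ((1 + σ x)⁻¹ • (ContinuousLinearMap.id ℝ V - σ.smulRight ((1 + σ x)⁻¹ • x))) x := by
  have hinv : HasFDerivAt (fun z ↦ (1 + σ z)⁻¹) (-((1 + σ x) ^ 2)⁻¹ • σ) x :=
    (hasDerivAt_inv hx).comp_hasFDerivAt x (σ.hasFDerivAt.const_add 1)
  refine (hinv.smul (hasFDerivAt_id x)).congr_fderiv ?_
  ext v
  generalize 1 + σ x = s
  simp only [id_eq, add_apply, smul_apply, ContinuousLinearMap.coe_id', sub_apply,
    ContinuousLinearMap.smulRight_apply, smul_eq_mul, ← inv_pow]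
  module

lemma det_fderiv_projectiveMap [FiniteDimensional ℝ V] {σ : V →L[ℝ] ℝ} {x : V}
    (hx : 1 + σ x ≠ 0) :
    (fderiv ℝ (projectiveMap σ) x).det = (1 + σ x)⁻¹ ^ (finrank ℝ V + 1) := by
  have hcoe : ((ContinuousLinearMap.id ℝ V - σ.smulRight ((1 + σ x)⁻¹ • x) : V →L[ℝ] V) :
      V →ₗ[ℝ] V) =
      LinearMap.transvection (σ : Dual ℝ V) (-((1 + σ x)⁻¹ • x)) := by
    ext v
    simp [LinearMap.transvection.apply, sub_eq_add_neg]
  have hdet : 1 + σ (-((1 + σ x)⁻¹ • x)) = (1 + σ x)⁻¹ := by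
    rw [map_neg, ← sub_eq_add_neg]
    exact one_sub_apply_projectiveMap hx
  rw [(hasFDerivAt_projectiveMap hx).fderiv, ContinuousLinearMap.det,
    ContinuousLinearMap.toLinearMap_smul, LinearMap.det_smul, hcoe, LinearMap.transvection.det,
    ContinuousLinearMap.coe_coe, hdet, pow_succ]

lemma addHaar_image_projectiveMap_le [FiniteDimensional ℝ V] [MeasurableSpace V] [BorelSpace V]
    (μ : Measure V) [μ.IsAddHaarMeasure] {σ : V →L[ℝ] ℝ} {s : Set V} {δ : ℝ} (hδ : 0 < δ)
    (hs : ∀ x ∈ s, δ ≤ 1 + σ x) :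
    μ (projectiveMap σ '' s) ≤ ENNReal.ofReal (δ⁻¹ ^ (finrank ℝ V + 1)) * μ s := by
  set s' := toMeasurable μ s ∩ {x | δ ≤ 1 + σ x}
  have hs'm : MeasurableSet s' :=
    (measurableSet_toMeasurable μ s).inter (measurableSet_le (by fun_prop) (by fun_prop))
  have hpos : ∀ x ∈ s', 0 < 1 + σ x := fun x hx ↦ hδ.trans_le hx.2
  calc μ (projectiveMap σ '' s)
      ≤ μ (projectiveMap σ '' s') :=
        measure_mono (image_mono fun x hx ↦ ⟨subset_toMeasurable μ s hx, hs x hx⟩)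
    _ ≤ ∫⁻ x in s', ENNReal.ofReal |(fderiv ℝ (projectiveMap σ) x).det| ∂μ :=
        addHaar_image_le_lintegral_abs_det_fderiv μ hs'm fun x hx ↦
          (hasFDerivAt_projectiveMap (hpos x hx).ne').differentiableAt.hasFDerivAt.hasFDerivWithinAt
    _ ≤ ∫⁻ _ in s', ENNReal.ofReal (δ⁻¹ ^ (finrank ℝ V + 1)) ∂μ := by
        refine setLIntegral_mono' hs'm fun x hx ↦ ENNReal.ofReal_le_ofReal ?_
        have := hpos x hx
        rw [det_fderiv_projectiveMap this.ne', abs_of_pos (by positivity)]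
        gcongr
        exact hx.2
    _ ≤ ENNReal.ofReal (δ⁻¹ ^ (finrank ℝ V + 1)) * μ s := by
        rw [setLIntegral_const, ← measure_toMeasurable s]
        gcongr
        exact inter_subset_left

lemma addHaar_le_of_mapsTo_projectiveMap [FiniteDimensional ℝ V] [MeasurableSpace V]
    [BorelSpace V] (μ : Measure V) [μ.IsAddHaarMeasure] {σ : V →L[ℝ] ℝ} {s t : Set V} {r : ℝ}
    (hr : 0 < r) (hs : ∀ x ∈ s, 1 + σ x ∈ Ioc 0 r) (hst : MapsTo (projectiveMap σ) s t) :
    μ s ≤ ENNReal.ofReal (r ^ (finrank ℝ V + 1)) * μ t := by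
  set t' := t ∩ {y | r⁻¹ ≤ 1 + (-σ) y}
  have hsub : s ⊆ projectiveMap (-σ) '' t' := by
    intro x hx
    obtain ⟨hpos, hle⟩ := hs x hx
    refine ⟨projectiveMap σ x, ⟨hst hx, ?_⟩, projectiveMap_neg_projectiveMap hpos.ne'⟩
    rw [mem_ofPred_eq, neg_apply, ← sub_eq_add_neg, one_sub_apply_projectiveMap hpos.ne']
    exact inv_anti₀ hpos hle
  calc μ s ≤ μ (projectiveMap (-σ) '' t') := measure_mono hsub
    _ ≤ ENNReal.ofReal (r⁻¹⁻¹ ^ (finrank ℝ V + 1)) * μ t' :=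
        addHaar_image_projectiveMap_le μ (inv_pos.2 hr) fun x hx ↦ hx.2
    _ ≤ ENNReal.ofReal (r ^ (finrank ℝ V + 1)) * μ t := by
        rw [inv_inv]
        gcongr
        exact inter_subset_left

end ProjectiveMap

section Lines

open Module Set

variable {ι V : Type*} [Fintype ι] [NormedAddCommGroup V] [NormedSpace ℝ V]
  [MeasurableSpace V] [BorelSpace V]

lemma prod_rpow_mul_measure_pi_le [DecidableEq ι] {X : ι → Type*}
    [∀ i, MeasurableSpace (X i)] (μ : ∀ i, Measure (X i)) [∀ i, SigmaFinite (μ i)]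
    (hι : 1 < Fintype.card ι) {s t : Set (∀ i, X i)} {c : ι → ℝ≥0∞}
    (hst : ∀ x ∈ s, ∀ i, c i ≤ μ i {u | Function.update x i u ∈ t}) :
    (∏ i, c i) ^ ((Fintype.card ι : ℝ) - 1)⁻¹ * Measure.pi μ s ≤
      Measure.pi μ t ^ (1 + ((Fintype.card ι : ℝ) - 1)⁻¹) := by
  set q : ℝ := ((Fintype.card ι : ℝ) - 1)⁻¹
  have hcard : (0 : ℝ) < Fintype.card ι - 1 := sub_pos.2 (mod_cast hι)
  have hq : 0 ≤ q := by positivity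
  have hmul : (Fintype.card ι - 1 : ℝ) * q = 1 := mul_inv_cancel₀ hcard.ne'
  set t' := toMeasurable (Measure.pi μ) t
  have ht' : MeasurableSet t' := measurableSet_toMeasurable _ _
  have hind : Measurable (t'.indicator (1 : (∀ i, X i) → ℝ≥0∞)) := measurable_one.indicator ht'
  have hline : ∀ x ∈ s, ∀ i, c i ≤ ∫⁻ u, t'.indicator 1 (Function.update x i u) ∂μ i := by
    intro x hx i
    calc c i ≤ μ i {u | Function.update x i u ∈ t'} :=
          (hst x hx i).trans (measure_mono fun u hu ↦ subset_toMeasurable _ _ hu)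
      _ = ∫⁻ u, t'.indicator 1 (Function.update x i u) ∂μ i :=
          (lintegral_indicator_one (measurable_update x ht')).symm
  have hgrid := lintegral_mul_prod_lintegral_pow_le μ hq hmul.le hind
  simp only [hmul, sub_self, ENNReal.rpow_zero, one_mul] at hgrid
  rw [lintegral_indicator_one ht', measure_toMeasurable] at hgrid
  set g : (∀ i, X i) → ℝ≥0∞ :=
    fun x ↦ ∏ i, (∫⁻ u, t'.indicator 1 (Function.update x i u) ∂μ i) ^ q
  have hg : Measurable g := by
    refine Finset.measurable_prod _ fun i _ ↦ Measurable.pow_const ?_ q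
    simp_rw [← lmarginal_singleton]
    exact hind.lmarginal μ
  calc (∏ i, c i) ^ q * Measure.pi μ s
      ≤ (∏ i, c i) ^ q * Measure.pi μ {x | (∏ i, c i) ^ q ≤ g x} := by
        gcongr
        intro x hx
        rw [mem_ofPred_eq, ← ENNReal.prod_rpow_of_nonneg hq]
        exact Finset.prod_le_prod' fun i _ ↦ ENNReal.rpow_le_rpow (hline x hx i) hq
    _ ≤ ∫⁻ x, g x ∂Measure.pi μ := mul_meas_ge_le_lintegral hg _
    _ ≤ Measure.pi μ t ^ (1 + q) := hgrid

lemma measurePreserving_equivFun (b : Basis ι ℝ V) :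
    MeasurePreserving b.equivFunL.toHomeomorph.toMeasurableEquiv b.addHaar volume := by
  refine ⟨by fun_prop, ?_⟩
  have hmap : b.map b.equivFunL.toLinearEquiv = Pi.basisFun ℝ ι := by
    classical
    ext i j
    simp [Pi.single_apply, Finsupp.single_apply, eq_comm]
  rw [← addHaarMeasure_eq_volume_pi, ← Basis.parallelepiped_basisFun, ← Basis.addHaar_def, ← hmap]
  exact b.map_addHaar b.equivFunL

lemma prod_rpow_mul_addHaar_le (b : Basis ι ℝ V) (hι : 1 < Fintype.card ι) {s t : Set V}
    {c : ι → ℝ≥0∞}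
    (hst : ∀ x ∈ s, ∀ i, c i ≤ volume {u : ℝ | x + u • b i ∈ t}) :
    (∏ i, c i) ^ ((Fintype.card ι : ℝ) - 1)⁻¹ * b.addHaar s ≤
      b.addHaar t ^ (1 + ((Fintype.card ι : ℝ) - 1)⁻¹) := by
  classical
  have hb := (measurePreserving_equivFun b).symm
  rw [← hb.measure_preimage_equiv s, ← hb.measure_preimage_equiv t]
  refine prod_rpow_mul_measure_pi_le (fun _ ↦ volume) hι fun x hx i ↦ ?_
  have hupdate (u : ℝ) :
      b.equivFun.symm (Function.update x i u) = b.equivFun.symm x + (u + -x i) • b i := by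
    have hsingle (t : ℝ) : b.equivFun.symm (Pi.single i t) = t • b i := by
      simp [b.equivFun_symm_apply, Pi.single_apply]
    rw [Pi.update_eq_sub_add_single, map_add, map_sub, hsingle, hsingle]
    module
  calc c i ≤ volume {u : ℝ | b.equivFun.symm x + u • b i ∈ t} := hst _ hx i
    _ = volume {u : ℝ | b.equivFun.symm x + (u + -x i) • b i ∈ t} :=
      (measure_preimage_add_right volume (-x i) _).symm
    _ = volume {u : ℝ | b.equivFun.symm (Function.update x i u) ∈ t} := by simp_rw [hupdate]

/-- If the segments from the points of `A` to the `n` vectors of a basis cover a set of measure `m`,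
and `A` lies in the slab `1 ≤ 1 - σ ≤ 2`, where `σ` is the functional equal to `1` on the basis,
then `slabBound n m` bounds the measure of `A` (both normalized by the basis). Each factor
`2 ^ (n + 1)` bounds the Jacobian of a projective map. -/
def slabBound (n : ℕ) (m : ℝ≥0∞) : ℝ≥0∞ :=
  2 ^ (n + 1) * (2 ^ (n + 1) * m) ^ (1 + ((n : ℝ) - 1)⁻¹)

lemma slabBound_mono {n : ℕ} (hn : 1 ≤ n) : Monotone (slabBound n) := fun m m' hm ↦ by
  have hq : (0 : ℝ) ≤ ((n : ℝ) - 1)⁻¹ := inv_nonneg.2 (sub_nonneg.2 (mod_cast hn))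
  unfold slabBound
  gcongr

lemma slabBound_ne_top {n : ℕ} {m : ℝ≥0∞} (hn : 1 ≤ n) (hm : m ≠ ∞) : slabBound n m ≠ ∞ := by
  have hq : (0 : ℝ) ≤ ((n : ℝ) - 1)⁻¹ := inv_nonneg.2 (sub_nonneg.2 (mod_cast hn))
  unfold slabBound
  finiteness

lemma addHaar_le_of_segment_subset (b : Basis ι ℝ V) (hι : 1 < Fintype.card ι) {σ : V →L[ℝ] ℝ}
    (hσ : ∀ i, σ (b i) = 1) {A B : Set V} (hA : ∀ x ∈ A, 1 - σ x ∈ Icc 1 2)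
    (hAB : ∀ x ∈ A, ∀ i, segment ℝ (b i) x ⊆ B) :
    b.addHaar A ≤ slabBound (Fintype.card ι) (b.addHaar B) := by
  set q : ℝ := ((Fintype.card ι : ℝ) - 1)⁻¹
  have hq : 0 ≤ q := inv_nonneg.2 (sub_nonneg.2 (mod_cast hι.le))
  have := b.finiteDimensional_of_finite
  have hjacobian {τ : V →L[ℝ] ℝ} {s t : Set V} (hs : ∀ x ∈ s, 1 + τ x ∈ Ioc 0 2)
      (hst : MapsTo (projectiveMap τ) s t) :
      b.addHaar s ≤ 2 ^ (Fintype.card ι + 1) * b.addHaar t := by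
    simpa [ENNReal.ofReal_pow, finrank_eq_card_basis b] using
      addHaar_le_of_mapsTo_projectiveMap b.addHaar zero_lt_two hs hst
  set E := projectiveMap (-σ) '' A
  set F := {z | 1 + σ z ∈ Ioc 0 2 ∧ projectiveMap σ z ∈ B}
  have hslice : ∀ z ∈ E, ∀ i, Icc 0 1 ⊆ {t : ℝ | z + t • b i ∈ F} := by
    rintro _ ⟨x, hx, rfl⟩ i t ht
    obtain ⟨hdom, hmem⟩ := projectiveMap_projectiveMap_neg_add_smul_mem (hσ i) (hA x hx) ht
    exact ⟨hdom, hAB x hx i hmem⟩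
  have hEF : b.addHaar E ≤ b.addHaar F ^ (1 + q) := by
    simpa using prod_rpow_mul_addHaar_le b hι (c := 1) fun z hz i ↦ by
      simpa using measure_mono (μ := volume) (hslice z hz i)
  calc b.addHaar A ≤ 2 ^ (Fintype.card ι + 1) * b.addHaar E :=
        hjacobian (fun x hx ↦ by
          obtain ⟨hx₁, hx₂⟩ := hA x hx
          constructor <;> rw [neg_apply] <;> linarith) (mapsTo_image _ _)
    _ ≤ 2 ^ (Fintype.card ι + 1) * (2 ^ (Fintype.card ι + 1) * b.addHaar B) ^ (1 + q) := by
        gcongr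
        exact hEF.trans
          (ENNReal.rpow_le_rpow (hjacobian (fun z hz ↦ hz.1) fun z hz ↦ hz.2) (by positivity))

end Lines

section Gram

open Module Set

variable {ι V : Type*} [Fintype ι] [DecidableEq ι] [NormedAddCommGroup V]
  [InnerProductSpace ℝ V] [FiniteDimensional ℝ V] [MeasurableSpace V] [BorelSpace V]

lemma volume_eq_sqrt_det_gram_smul_addHaar (b : Basis ι ℝ V) :
    (volume : Measure V) = ENNReal.ofReal √(Matrix.gram ℝ b).det • b.addHaar := by
  let o : OrthonormalBasis ι ℝ V := (stdOrthonormalBasis ℝ V).reindex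
    (Fintype.equivOfCardEq (by rw [Fintype.card_fin, finrank_eq_card_basis b]))
  have hdet : √(Matrix.gram ℝ b).det = |o.toBasis.det b| := by
    rw [Matrix.gram_eq_conjTranspose_mul o, Matrix.det_mul, Matrix.det_conjTranspose,
      star_trivial, Real.sqrt_mul_self_eq_abs, Basis.det_apply]
    rfl
  rw [hdet, ← Measure.addHaar_parallelepiped, o.addHaar_eq_volume, Basis.addHaar_def,
    ← Basis.coe_parallelepiped]
  exact Measure.addHaarMeasure_unique _ _

lemma sqrt_det_gram_rpow_mul_volume_le {v : ι → V} (hι : 1 < Fintype.card ι)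
    (hcard : Fintype.card ι = finrank ℝ V) {σ : V →L[ℝ] ℝ} (hσ : ∀ i, σ (v i) = 1)
    {A B : Set V} (hA : ∀ x ∈ A, 1 - σ x ∈ Icc 1 2)
    (hAB : ∀ x ∈ A, ∀ i, segment ℝ (v i) x ⊆ B) :
    ENNReal.ofReal √(Matrix.gram ℝ v).det ^ ((Fintype.card ι : ℝ) - 1)⁻¹ * volume A ≤
      slabBound (Fintype.card ι) (volume B) := by
  set q : ℝ := ((Fintype.card ι : ℝ) - 1)⁻¹
  have hq : 0 < q := inv_pos.2 (sub_pos.2 (mod_cast hι))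
  obtain hdet | hdet := eq_or_ne (Matrix.gram ℝ v).det 0
  · simp [hdet, hq]
  have : Nonempty ι := Fintype.card_pos_iff.1 (zero_lt_one.trans hι)
  let b := basisOfLinearIndependentOfCardEqFinrank
    (Matrix.linearIndependent_of_det_gram_ne_zero hdet) hcard
  have hb : ⇑b = v := coe_basisOfLinearIndependentOfCardEqFinrank _ hcard
  have hslab := addHaar_le_of_segment_subset b hι (by simpa only [hb] using hσ) hA
    (by simpa only [hb] using hAB)
  set D := ENNReal.ofReal √(Matrix.gram ℝ v).det
  set M : ℝ≥0∞ := 2 ^ (Fintype.card ι + 1)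
  have hvolume (s : Set V) : volume s = D * b.addHaar s := by
    rw [volume_eq_sqrt_det_gram_smul_addHaar b, hb, Measure.smul_apply, smul_eq_mul]
  calc D ^ q * volume A = D ^ q * (D * b.addHaar A) := by rw [hvolume]
    _ ≤ D ^ q * (D * (M * (M * b.addHaar B) ^ (1 + q))) := by gcongr; exact hslab
    _ = M * (D ^ (1 + q) * (M * b.addHaar B) ^ (1 + q)) := by
        rw [ENNReal.rpow_add_of_nonneg (x := D) _ _ zero_le_one hq.le, ENNReal.rpow_one]
        ring
    _ = M * (M * volume B) ^ (1 + q) := by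
        rw [← ENNReal.mul_rpow_of_nonneg _ _ (by positivity), hvolume, mul_left_comm]

lemma sqrt_det_gram_sub_rpow_mul_volume_le {y : ι → V} {p : V} (hι : 1 < Fintype.card ι)
    (hcard : Fintype.card ι = finrank ℝ V) {σ : V →L[ℝ] ℝ} (hσ : ∀ i, σ (y i - p) = 1)
    {A B : Set V} (hA : ∀ x ∈ A, 1 - σ (x - p) ∈ Icc 1 2)
    (hAB : ∀ x ∈ A, ∀ i, segment ℝ (y i) x ⊆ B) :
    ENNReal.ofReal √(Matrix.gram ℝ fun i ↦ y i - p).det ^ ((Fintype.card ι : ℝ) - 1)⁻¹ *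
        volume A ≤
      slabBound (Fintype.card ι) (volume B) := by
  rw [← measure_preimage_add volume p A, ← measure_preimage_add volume p B]
  refine sqrt_det_gram_rpow_mul_volume_le hι hcard hσ (fun x hx ↦ ?_) fun x hx i ↦ ?_
  · simpa using hA _ hx
  · rw [← segment_translate_preimage ℝ p, add_sub_cancel]
    exact preimage_mono (hAB _ hx i)

end Gram

section RegularSimplex

open Finset RealInnerProductSpace

variable {ι V : Type*} [Fintype ι] [NormedAddCommGroup V] [InnerProductSpace ℝ V] {a : ℝ}

lemma card_mul_norm_sq_of_sum_eq_zero {u : ι → V} (hdist : Pairwise fun i j ↦ ‖u i - u j‖ = a)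
    (hsum : ∑ i, u i = 0) (i : ι) :
    Fintype.card ι * ‖u i‖ ^ 2 = (Fintype.card ι - 1) * (a ^ 2 / 2) := by
  classical
  have hexpand (i : ι) :
      ∑ j, ‖u i - u j‖ ^ 2 = Fintype.card ι * ‖u i‖ ^ 2 + ∑ j, ‖u j‖ ^ 2 := by
    simp_rw [norm_sub_sq_real, sum_add_distrib, sum_sub_distrib, ← mul_sum, ← inner_sum, hsum]
    simp
  have hside (i : ι) : ∑ j, ‖u i - u j‖ ^ 2 = (Fintype.card ι - 1) * a ^ 2 := by
    rw [← sum_erase_add _ _ (mem_univ i), sum_congr rfl fun j hj ↦ by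
      rw [hdist (ne_of_mem_erase hj).symm]]
    simp [card_erase_of_mem, Fintype.card_pos_iff.2 ⟨i⟩]
  have htotal : Fintype.card ι * (2 * ∑ j, ‖u j‖ ^ 2) =
      Fintype.card ι * ((Fintype.card ι - 1) * a ^ 2) := by
    have hsum_eq : ∑ i, ∑ j, ‖u i - u j‖ ^ 2 = Fintype.card ι * ((Fintype.card ι - 1) * a ^ 2) := by
      simp [hside]
    rw [← hsum_eq, sum_congr rfl fun i _ ↦ hexpand i, sum_add_distrib, ← mul_sum]
    simp only [sum_const, card_univ, nsmul_eq_mul]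
    ring
  have hcard : (Fintype.card ι : ℝ) ≠ 0 := by
    have : Nonempty ι := ⟨i⟩
    simp
  linarith [hexpand i, hside i, mul_left_cancel₀ hcard htotal]

lemma det_gram_of_norm_eq [DecidableEq ι] {v : ι → V} {r : ℝ} (ha : a ≠ 0)
    (hdist : Pairwise fun i j ↦ ‖v i - v j‖ = a) (hnorm : ∀ i, ‖v i‖ ^ 2 = r) :
    (Matrix.gram ℝ v).det =
      (a ^ 2 / 2) ^ Fintype.card ι * (1 + Fintype.card ι * (r / (a ^ 2 / 2) - 1)) := by
  have hgram : Matrix.gram ℝ v = (a ^ 2 / 2) • (1 + Matrix.replicateCol Unit (1 : ι → ℝ) *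
      Matrix.replicateRow Unit fun _ : ι ↦ r / (a ^ 2 / 2) - 1) := by
    ext i j
    have hinner : ⟪v i, v j⟫ = r - ‖v i - v j‖ ^ 2 / 2 := by
      linarith [norm_sub_sq_real (v i) (v j), hnorm i, hnorm j]
    have hentry : (Matrix.replicateCol Unit (1 : ι → ℝ) *
        Matrix.replicateRow Unit (fun _ : ι ↦ r / (a ^ 2 / 2) - 1) : Matrix ι ι ℝ) i j =
          r / (a ^ 2 / 2) - 1 := by
      simp [Matrix.mul_apply]
    rw [Matrix.gram_apply, hinner, Matrix.smul_apply, Matrix.add_apply, hentry, smul_eq_mul]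
    obtain rfl | hij := eq_or_ne i j
    · rw [Matrix.one_apply_eq, sub_self, norm_zero]
      field_simp
      ring
    · rw [Matrix.one_apply_ne hij, hdist hij]
      field_simp
      ring
  rw [hgram, Matrix.det_smul, Matrix.det_one_add_replicateCol_mul_replicateRow]
  simp [dotProduct, mul_sub]

lemma det_gram_sub_smul [DecidableEq ι] [Nonempty ι] {u : ι → V} {e : V} (ha : a ≠ 0)
    (hdist : Pairwise fun i j ↦ ‖u i - u j‖ = a) (hsum : ∑ i, u i = 0) (he : ‖e‖ = 1)
    (hperp : ∀ i, ⟪e, u i⟫ = 0) (h : ℝ) :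
    (Matrix.gram ℝ fun i ↦ u i - h • e).det =
      Fintype.card ι * h ^ 2 * (a ^ 2 / 2) ^ (Fintype.card ι - 1) := by
  have hcard : (Fintype.card ι : ℝ) ≠ 0 := by simp
  have hnorm (i : ι) : ‖u i - h • e‖ ^ 2 =
      (1 - (Fintype.card ι : ℝ)⁻¹) * (a ^ 2 / 2) + h ^ 2 := by
    have hu := card_mul_norm_sq_of_sum_eq_zero hdist hsum i
    have : ⟪u i, h • e⟫ = 0 := by rw [inner_smul_right, real_inner_comm, hperp, mul_zero]
    rw [norm_sub_sq_real, this, norm_smul, he, mul_one, Real.norm_eq_abs, sq_abs]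
    field_simp
    linarith
  rw [det_gram_of_norm_eq ha (by simpa using hdist) hnorm,
    ← mul_pow_sub_one Fintype.card_ne_zero (a ^ 2 / 2)]
  field_simp
  ring

end RegularSimplex

section Decay

open Module Set RealInnerProductSpace

lemma measure_le_of_forall_dyadic {α : Type*} [MeasurableSpace α] {μ : Measure α} {f : α → ℝ}
    {s : Set α} {M : ℝ≥0∞} {q : ℝ} (hq : 0 < q)
    (hM : ∀ t > 0, μ {x ∈ s | f x ∈ Icc t (2 * t)} ≤ M * ENNReal.ofReal (t ^ (-q)))
    {h : ℝ} (hh : 0 < h) :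
    μ {x ∈ s | h ≤ f x} ≤ M * ENNReal.ofReal ((1 - 2 ^ (-q))⁻¹ * h ^ (-q)) := by
  have hcover : {x ∈ s | h ≤ f x} ⊆
      ⋃ k : ℕ, {x ∈ s | f x ∈ Icc (2 ^ k * h) (2 * (2 ^ k * h))} := by
    rintro x ⟨hxs, hx⟩
    obtain ⟨k, hk, hk'⟩ := exists_nat_pow_near ((one_le_div hh).2 hx) one_lt_two
    refine mem_iUnion.2 ⟨k, hxs, (le_div_iff₀ hh).1 hk, ?_⟩
    rw [← mul_assoc, ← pow_succ']
    exact ((div_lt_iff₀ hh).1 hk').le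
  have hratio : (2 : ℝ) ^ (-q) < 1 :=
    Real.rpow_lt_one_of_one_lt_of_neg one_lt_two (neg_lt_zero.2 hq)
  have hterm (k : ℕ) : (2 ^ k * h) ^ (-q) = ((2 : ℝ) ^ (-q)) ^ k * h ^ (-q) := by
    rw [Real.mul_rpow (by positivity) hh.le, Real.rpow_pow_comm zero_le_two]
  have hsum : HasSum (fun k : ℕ ↦ (2 ^ k * h) ^ (-q)) ((1 - 2 ^ (-q))⁻¹ * h ^ (-q)) := by
    simp_rw [hterm]
    exact (hasSum_geometric_of_lt_one (by positivity) hratio).mul_right _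
  calc μ {x ∈ s | h ≤ f x}
      ≤ ∑' k : ℕ, μ {x ∈ s | f x ∈ Icc (2 ^ k * h) (2 * (2 ^ k * h))} :=
        (measure_mono hcover).trans (measure_iUnion_le _)
    _ ≤ ∑' k : ℕ, M * ENNReal.ofReal ((2 ^ k * h) ^ (-q)) :=
        ENNReal.tsum_le_tsum fun k ↦ hM _ (by positivity)
    _ = M * ENNReal.ofReal ((1 - 2 ^ (-q))⁻¹ * h ^ (-q)) := by
        rw [ENNReal.tsum_mul_left, ← ENNReal.ofReal_tsum_of_nonneg (fun k ↦ by positivity)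
          hsum.summable, hsum.tsum_eq]

variable {ι V : Type*} [Fintype ι] [NormedAddCommGroup V] [InnerProductSpace ℝ V] {a : ℝ}

lemma exists_rpow_le_sqrt_det_gram_sub_rpow [DecidableEq ι] {y : ι → V} {e : V} {h : ℝ}
    (hι : 1 < Fintype.card ι) (ha : 0 < a) (hdist : Pairwise fun i j ↦ ‖y i - y j‖ = a)
    (he : ‖e‖ = 1) (hperp : ∀ i, ⟪e, y i⟫ = 0) (hh : 0 < h) :
    ∃ p : V, ⟪e, p⟫ = h ∧
      a / √2 * h ^ ((Fintype.card ι : ℝ) - 1)⁻¹ ≤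
        √(Matrix.gram ℝ fun i ↦ y i - p).det ^ ((Fintype.card ι : ℝ) - 1)⁻¹ := by
  have : Nonempty ι := Fintype.card_pos_iff.1 (zero_lt_one.trans hι)
  set q : ℝ := ((Fintype.card ι : ℝ) - 1)⁻¹
  have hq : 0 < q := inv_pos.2 (sub_pos.2 (mod_cast hι))
  have hcast : ((Fintype.card ι - 1 : ℕ) : ℝ) = (Fintype.card ι : ℝ) - 1 := by
    rw [Nat.cast_sub hι.le, Nat.cast_one]
  set c : V := (Fintype.card ι : ℝ)⁻¹ • ∑ i, y i
  have hc : ⟪e, c⟫ = 0 := by simp [c, inner_smul_right, inner_sum, hperp]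
  have hsum : ∑ i, (y i - c) = 0 := by simp [c, ← Nat.cast_smul_eq_nsmul ℝ]
  have hdet : (Matrix.gram ℝ fun i ↦ y i - (c + h • e)).det =
      Fintype.card ι * h ^ 2 * (a ^ 2 / 2) ^ (Fintype.card ι - 1) := by
    simpa [sub_sub] using det_gram_sub_smul ha.ne' (u := fun i ↦ y i - c) (by simpa using hdist)
      hsum he (by simp [inner_sub_right, hperp, hc]) h
  refine ⟨c + h • e, by simp [inner_add_right, hc, inner_smul_right, he], ?_⟩
  have hroot : (h * (a / √2) ^ (Fintype.card ι - 1)) ^ q = a / √2 * h ^ q := by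
    rw [Real.mul_rpow hh.le (by positivity), ← Real.rpow_natCast, hcast,
      Real.rpow_rpow_inv (by positivity) (inv_pos.1 hq).ne', mul_comm]
  rw [← hroot, hdet]
  gcongr
  apply Real.le_sqrt_of_sq_le
  rw [mul_pow, ← pow_mul, mul_comm _ 2, pow_mul, div_pow, Real.sq_sqrt zero_le_two]
  gcongr
  exact le_mul_of_one_le_left (by positivity) (mod_cast hι.le)

variable [FiniteDimensional ℝ V] [MeasurableSpace V] [BorelSpace V]

lemma volume_slab_le {y : ι → V} {e : V} {G B : Set V} {h : ℝ} (hι : 1 < Fintype.card ι)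
    (hcard : Fintype.card ι = finrank ℝ V) (ha : 0 < a)
    (hdist : Pairwise fun i j ↦ ‖y i - y j‖ = a) (he : ‖e‖ = 1) (hperp : ∀ i, ⟪e, y i⟫ = 0)
    (hGB : ∀ x ∈ G, ∀ i, segment ℝ (y i) x ⊆ B) (hh : 0 < h) :
    volume {x ∈ G | ⟪e, x⟫ ∈ Icc h (2 * h)} ≤
      ENNReal.ofReal (√2 / a) * slabBound (Fintype.card ι) (volume B) *
        ENNReal.ofReal (h ^ (-((Fintype.card ι : ℝ) - 1)⁻¹)) := by
  classical
  set q : ℝ := ((Fintype.card ι : ℝ) - 1)⁻¹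
  have hq : 0 < q := inv_pos.2 (sub_pos.2 (mod_cast hι))
  obtain ⟨p, hp, hgram⟩ := exists_rpow_le_sqrt_det_gram_sub_rpow hι ha hdist he hperp hh
  let σ : V →L[ℝ] ℝ := -h⁻¹ • innerSL ℝ e
  have hσ (x : V) : 1 - σ (x - p) = ⟪e, x⟫ / h := by
    simp only [σ, smul_apply, coe_innerSL_apply, inner_sub_right, hp, smul_eq_mul]
    field_simp
    ring
  have hσy (i : ι) : σ (y i - p) = 1 := by
    linarith [(hσ (y i)).trans (by rw [hperp, zero_div])]
  set A := {x ∈ G | ⟪e, x⟫ ∈ Icc h (2 * h)}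
  have hA : ∀ x ∈ A, 1 - σ (x - p) ∈ Icc 1 2 := fun x hx ↦ by
    rw [hσ]
    exact ⟨(one_le_div hh).2 hx.2.1, (div_le_iff₀ hh).2 hx.2.2⟩
  set w := a / √2 * h ^ q
  have hw : 0 < w := by positivity
  have hwinv : w⁻¹ = √2 / a * h ^ (-q) := by
    rw [mul_inv, inv_div, Real.rpow_neg hh.le]
  have hmul : ENNReal.ofReal w * volume A ≤ slabBound (Fintype.card ι) (volume B) := by
    refine le_trans ?_
      (sqrt_det_gram_sub_rpow_mul_volume_le hι hcard hσy hA fun x hx ↦ hGB x hx.1)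
    rw [ENNReal.ofReal_rpow_of_nonneg (Real.sqrt_nonneg _) hq.le]
    gcongr
  calc volume A = ENNReal.ofReal w⁻¹ * (ENNReal.ofReal w * volume A) := by
        rw [← mul_assoc, ← ENNReal.ofReal_mul (by positivity), inv_mul_cancel₀ hw.ne',
          ENNReal.ofReal_one, one_mul]
    _ ≤ ENNReal.ofReal w⁻¹ * slabBound (Fintype.card ι) (volume B) := by gcongr
    _ = _ := by rw [hwinv, ENNReal.ofReal_mul (by positivity), mul_right_comm]

lemma volume_setOf_le_abs_inner_le {y : ι → V} {e : V} {G B : Set V} {h : ℝ}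
    (hι : 1 < Fintype.card ι) (hcard : Fintype.card ι = finrank ℝ V) (ha : 0 < a)
    (hdist : Pairwise fun i j ↦ ‖y i - y j‖ = a) (he : ‖e‖ = 1) (hperp : ∀ i, ⟪e, y i⟫ = 0)
    (hGB : ∀ x ∈ G, ∀ i, segment ℝ (y i) x ⊆ B) (hh : 0 < h) :
    volume {x ∈ G | h ≤ |⟪e, x⟫|} ≤
      2 * (ENNReal.ofReal (√2 / a) * slabBound (Fintype.card ι) (volume B) *
        ENNReal.ofReal ((1 - 2 ^ (-((Fintype.card ι : ℝ) - 1)⁻¹))⁻¹ *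
          h ^ (-((Fintype.card ι : ℝ) - 1)⁻¹))) := by
  have hhalf {e' : V} (he' : ‖e'‖ = 1) (hperp' : ∀ i, ⟪e', y i⟫ = 0) :=
    measure_le_of_forall_dyadic (inv_pos.2 (sub_pos.2 (mod_cast hι)))
      (fun t ht ↦ volume_slab_le hι hcard ha hdist he' hperp' hGB ht) hh
  have hcover : {x ∈ G | h ≤ |⟪e, x⟫|} ⊆ {x ∈ G | h ≤ ⟪e, x⟫} ∪ {x ∈ G | h ≤ ⟪-e, x⟫} := by
    rintro x ⟨hxG, hx⟩
    exact (le_abs.1 hx).imp (⟨hxG, ·⟩) fun hx ↦ ⟨hxG, by rwa [inner_neg_left]⟩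
  rw [two_mul]
  exact (measure_mono hcover).trans <| (measure_union_le _ _).trans <|
    add_le_add (hhalf he hperp) (hhalf (by rwa [norm_neg]) fun i ↦ by
      rw [inner_neg_left, hperp, neg_zero])

end Decay

section Stars

variable {n : ℕ}

lemma segment_subset_starSet {x z : EuclideanSpace ℝ (Fin n)}
    {A : Set (EuclideanSpace ℝ (Fin n))} (hz : z ∈ A) : segment ℝ x z ⊆ starSet x A :=
  Set.subset_biUnion_of_mem (u := fun z ↦ segment ℝ x z) hz

lemma volume_iUnion_starSet_le {ι : Type*} [Fintype ι] {y : ι → EuclideanSpace ℝ (Fin n)}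
    {G : Set (EuclideanSpace ℝ (Fin n))} {m : ℝ≥0∞} (hG : ∀ i, volume (starSet (y i) G) ≤ m) :
    volume (⋃ i, starSet (y i) G) ≤ Fintype.card ι * m :=
  calc volume (⋃ i, starSet (y i) G) ≤ ∑ i, volume (starSet (y i) G) :=
        measure_iUnion_fintype_le _ _
    _ ≤ Fintype.card ι * m := by
        simpa using Finset.sum_le_sum fun i (_ : i ∈ Finset.univ) ↦ hG i

lemma volume_setOf_le_abs_apply_le {y : Fin n → EuclideanSpace ℝ (Fin n)} {k : Fin n} {a h : ℝ}
    {G : Set (EuclideanSpace ℝ (Fin n))} {m : ℝ≥0∞} (hn : 1 < n) (ha : 0 < a)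
    (hdist : Pairwise fun i j ↦ ‖y i - y j‖ = a) (hyk : ∀ i, y i k = 0)
    (hG : ∀ i, volume (starSet (y i) G) ≤ m) (hh : 0 < h) :
    volume {x ∈ G | h ≤ |x k|} ≤
      2 * (ENNReal.ofReal (√2 / a) * slabBound n (n * m) *
        ENNReal.ofReal ((1 - 2 ^ (-((n : ℝ) - 1)⁻¹))⁻¹ * h ^ (-((n : ℝ) - 1)⁻¹))) := by
  have hinner (x : EuclideanSpace ℝ (Fin n)) : inner ℝ (EuclideanSpace.single k 1) x = x k := by
    simp [EuclideanSpace.inner_single_left]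
  have hstar : ∀ x ∈ G, ∀ i, segment ℝ (y i) x ⊆ ⋃ i, starSet (y i) G := fun x hx i ↦
    (segment_subset_starSet hx).trans (Set.subset_iUnion (fun i ↦ starSet (y i) G) i)
  have hdecay := volume_setOf_le_abs_inner_le (e := EuclideanSpace.single k (1 : ℝ))
    (by simpa using hn) (by simp) ha hdist (by simp) (fun i ↦ (hinner _).trans (hyk i)) hstar hh
  simp only [hinner, Fintype.card_fin] at hdecay
  refine hdecay.trans ?_
  gcongr
  exact slabBound_mono hn.le (by simpa using volume_iUnion_starSet_le hG)

end Stars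

lemma inv_mul_rpow_neg_inv_le {a R x : ℝ} (ha : 1 ≤ a) (hR : 1 ≤ R) (hx : 1 < x) :
    a⁻¹ * R ^ (-(x - 1)⁻¹) ≤ R ^ (-1 / (2 * x - 1)) := by
  have hexp : -(x - 1)⁻¹ ≤ -1 / (2 * x - 1) := by
    rw [neg_div, one_div, neg_le_neg_iff]
    exact inv_anti₀ (sub_pos.2 hx) (by linarith)
  exact (mul_le_of_le_one_left (by positivity) (inv_le_one_of_one_le₀ ha)).trans
    (Real.rpow_le_rpow_of_exponent_le hR hexp)

theorem statement17_general {n : ℕ} (hn : 2 ≤ n) (k : Fin n) {m : ℝ≥0∞} (hm : m ≠ ∞) {c₀ : ℝ}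
    (hc₀ : 0 < c₀) :
    ∃ C : ℝ, 0 < C ∧ ∀ a : ℝ, 0 < a → ∀ y : Fin n → EuclideanSpace ℝ (Fin n),
      (∀ i, y i k = 0) → (∀ i j, i ≠ j → ‖y i - y j‖ = a) →
      ∀ G : Set (EuclideanSpace ℝ (Fin n)), (∀ i, volume (starSet (y i) G) ≤ m) →
      ∀ R : ℝ, 0 < R →
        volume (({x : EuclideanSpace ℝ (Fin n) | c₀ * ‖x‖ ≤ |x k|} ∩ G) \ Metric.ball 0 R) ≤
          ENNReal.ofReal (C * a⁻¹ * R ^ (-((n : ℝ) - 1)⁻¹)) := by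
  set q : ℝ := ((n : ℝ) - 1)⁻¹
  have hq : 0 < q := inv_pos.2 (sub_pos.2 (mod_cast hn))
  set L : ℝ := (1 - 2 ^ (-q))⁻¹
  have hL : 0 < L :=
    inv_pos.2 (sub_pos.2 (Real.rpow_lt_one_of_one_lt_of_neg one_lt_two (neg_lt_zero.2 hq)))
  set S : ℝ := (slabBound n (n * m)).toReal + 1
  have hS : slabBound n (n * m) ≤ ENNReal.ofReal S :=
    (ENNReal.le_ofReal_iff_toReal_le (slabBound_ne_top (by omega) (by finiteness))
      (by positivity)).2 (lt_add_one _).le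
  refine ⟨2 * √2 * S * L * c₀ ^ (-q), by positivity, fun a ha y hyk hdist G hG R hR ↦ ?_⟩
  have hcone : ({x : EuclideanSpace ℝ (Fin n) | c₀ * ‖x‖ ≤ |x k|} ∩ G) \ Metric.ball 0 R ⊆
      {x ∈ G | c₀ * R ≤ |x k|} := by
    rintro x ⟨⟨hx, hxG⟩, hxR⟩
    have hRx : R ≤ ‖x‖ := by simpa using hxR
    exact ⟨hxG, (by gcongr : c₀ * R ≤ c₀ * ‖x‖).trans hx⟩
  calc volume (({x : EuclideanSpace ℝ (Fin n) | c₀ * ‖x‖ ≤ |x k|} ∩ G) \ Metric.ball 0 R)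
      ≤ 2 * (ENNReal.ofReal (√2 / a) * slabBound n (n * m) *
          ENNReal.ofReal (L * (c₀ * R) ^ (-q))) :=
        (measure_mono hcone).trans
          (volume_setOf_le_abs_apply_le hn ha hdist hyk hG (mul_pos hc₀ hR))
    _ ≤ 2 * (ENNReal.ofReal (√2 / a) * ENNReal.ofReal S *
          ENNReal.ofReal (L * (c₀ * R) ^ (-q))) := by gcongr
    _ = ENNReal.ofReal (2 * √2 * S * L * c₀ ^ (-q) * a⁻¹ * R ^ (-q)) := by
        rw [← ENNReal.ofReal_mul (by positivity), ← ENNReal.ofReal_mul (by positivity),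
          ← ENNReal.ofReal_ofNat, ← ENNReal.ofReal_mul (by positivity),
          Real.mul_rpow hc₀.le hR.le]
        congr 1
        ring

/-- decay of mass of `G` in the vertical cone away from the origin. -/
theorem statement17 (n : ℕ) (hn : 2 ≤ n) (c₂ c₀ : ℝ)
    (hc₂ : c₂ ∈ Set.Ioo (0 : ℝ) 1) (hc₀ : c₀ ∈ Set.Ioo (0 : ℝ) (1 / 2)) :
    ∃ c' C : ℝ, 0 < c' ∧ 0 < C ∧
      ∀ a : ℝ, 1 ≤ a →
      ∀ y : Fin n → EuclideanSpace ℝ (Fin n),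
        (∀ i, y i ⟨n - 1, by omega⟩ = 0) →
        (∀ i j, i ≠ j → ‖y i - y j‖ = a) →
        (∑ i, y i) = 0 →
      ∀ G : Set (EuclideanSpace ℝ (Fin n)), MeasurableSet G →
        ENNReal.ofReal c₂ ≤ volume G → volume G ≤ ENNReal.ofReal c₂⁻¹ →
        (∀ i, ENNReal.ofReal c₂ ≤ volume (starSet (y i) G) ∧
              volume (starSet (y i) G) ≤ ENNReal.ofReal c₂⁻¹) →
      ∀ R : ℝ, c' * a < R →
        volume (({x : EuclideanSpace ℝ (Fin n) | c₀ * ‖x‖ ≤ |x ⟨n - 1, by omega⟩|} ∩ G) \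
            Metric.ball 0 R) ≤
          ENNReal.ofReal (C * R ^ (-(1 : ℝ) / (2 * (n : ℝ) - 1))) := by
  obtain ⟨C, hC, hdecay⟩ :=
    statement17_general hn ⟨n - 1, by omega⟩ (ENNReal.ofReal_ne_top (r := c₂⁻¹)) hc₀.1
  refine ⟨1, C, one_pos, hC, fun a ha y hy hdist _ G _ _ _ hstar R hR ↦ ?_⟩
  rw [one_mul] at hR
  refine (hdecay a (by positivity) y hy hdist G (fun i ↦ (hstar i).2) R (by linarith)).trans ?_
  rw [mul_assoc]
  exact ENNReal.ofReal_le_ofReal <| mul_le_mul_of_nonneg_left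
    (inv_mul_rpow_neg_inv_le ha (by linarith) (mod_cast hn)) hC.le
end
end
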